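/- The position vector of M satisfies Δ^{III} x = ∇^{III}(2H/K, n) − (2H/K) n on U. -/

import Mathlib

open Matrix

noncomputable section

/-- The parameter domain `ℝ²`. -/
abbrev Param : Type := Fin 2 → ℝ

/-- Vectors in Euclidean 3-space. -/
abbrev Vec3 : Type := Fin 3 → ℝ

/-- Partial derivative of a vector-valued function in the `i`-th coordinate direction. -/
noncomputable def pd (i : Fin 2) (f : Param → Vec3) (u : Param) : Vec3 :=
  fderiv ℝ f u (Pi.single i 1)

/-- Partial derivative of a scalar function in the `i`-th coordinate direction. -/
noncomputable def pds (i : Fin 2) (f : Param → ℝ) (u : Param) : ℝ :=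
  fderiv ℝ f u (Pi.single i 1)

/-- The Euclidean inner product on `ℝ³`. -/
def dot3 (a b : Vec3) : ℝ := ∑ k, a k * b k

/-- The Euclidean norm on `ℝ³`. -/
noncomputable def norm3 (a : Vec3) : ℝ := Real.sqrt (dot3 a a)

/-- The Gauss map `n = (x_{/1} × x_{/2}) / ‖x_{/1} × x_{/2}‖`. -/
noncomputable def gaussMap (x : Param → Vec3) (u : Param) : Vec3 :=
  (norm3 (crossProduct (pd 0 x u) (pd 1 x u)))⁻¹ • crossProduct (pd 0 x u) (pd 1 x u)

/-- Components `g_{ij}` of the first fundamental form. -/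
noncomputable def fformI (x : Param → Vec3) (u : Param) : Matrix (Fin 2) (Fin 2) ℝ :=
  Matrix.of fun i j => dot3 (pd i x u) (pd j x u)

/-- Components `b_{ij} = ⟨∂²x/∂u^i∂u^j, n⟩` of the second fundamental form. -/
noncomputable def fformII (x : Param → Vec3) (u : Param) : Matrix (Fin 2) (Fin 2) ℝ :=
  Matrix.of fun i j => dot3 (pd i (pd j x) u) (gaussMap x u)

/-- Components `e_{ij} = ⟨n_{/i}, n_{/j}⟩` of the third fundamental form. -/
noncomputable def fformIII (x : Param → Vec3) (u : Param) : Matrix (Fin 2) (Fin 2) ℝ :=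
  Matrix.of fun i j => dot3 (pd i (gaussMap x) u) (pd j (gaussMap x) u)

/-- The Gauss curvature `K = det(b_{ij}) / det(g_{ij})`. -/
noncomputable def gaussCurv (x : Param → Vec3) (u : Param) : ℝ :=
  (fformII x u).det / (fformI x u).det

/-- The mean curvature `H = (1/2) g^{ij} b_{ij}`. -/
noncomputable def meanCurv (x : Param → Vec3) (u : Param) : ℝ :=
  (1 / 2) * ∑ i, ∑ j, (fformI x u)⁻¹ i j * fformII x u i j

/-- First Beltrami operator `∇^J(φ, ψ) = a^{ij} φ_{/i} ψ_{/j}` with respect to the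
fundamental form with component matrix `a`, for scalar `φ` and `ℝ³`-valued `ψ`. -/
noncomputable def beltrami1 (a : Param → Matrix (Fin 2) (Fin 2) ℝ)
    (φ : Param → ℝ) (ψ : Param → Vec3) (u : Param) : Vec3 :=
  ∑ i, ∑ j, ((a u)⁻¹ i j * pds i φ u) • pd j ψ u

/-- Second Beltrami operator
`Δ^J f = −(1/√|det a|) ∂_i (√|det a| a^{ij} ∂_j f)` with respect to the fundamental
form with component matrix `a`, acting componentwise on `ℝ³`-valued functions. -/
noncomputable def beltrami2 (a : Param → Matrix (Fin 2) (Fin 2) ℝ)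
    (f : Param → Vec3) (u : Param) : Vec3 :=
  -((Real.sqrt |(a u).det|)⁻¹ •
    ∑ i, ∑ j, pd i (fun v => (Real.sqrt |(a v).det| * (a v)⁻¹ i j) • pd j f v) u)

/-- `x` is an immersion on `U`: the partial derivatives are linearly independent. -/
def Immersed (x : Param → Vec3) (U : Set Param) : Prop :=
  ∀ u ∈ U, LinearIndependent ℝ ![pd 0 x u, pd 1 x u]

/-- `f` is nonconstant on `U`. -/
def NonconstOn (f : Param → Vec3) (U : Set Param) : Prop :=
  ¬ ∃ v : Vec3, ∀ u ∈ U, f u = v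

/-!
Write `φ = 2H/K`, let `W` be the Jacobian of the Gauss map, so that `n_{/1} × n_{/2} = W n` and
`det (e_{ij}) = W²`, and attach to a map `f` the pair `ν_f = (f_{/2} × n, n × f_{/1})`. By
Lagrange's identity `x_{/2} × n_{/1} + n_{/2} × x_{/1} = φ W n`. Expanding triple products and
using the symmetry of the second fundamental form then gives

  `W e^{ij} n_{/j} = ν_n^i`,  `W e^{ij} x_{/j} = -(ν_x^i + φ ν_n^i)`.

Mixed second derivatives cancel in divergences: `∂_i ν_f^i = f_{/2} × n_{/1} + n_{/2} × f_{/1}`,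
which is `φ W n` for `f = x` and `-2 W n` for `f = n`. Hence `W Δ^{III} x = ∂_i (ν_x^i + φ ν_n^i)`
equals `φ W n + φ_{/i} ν_n^i - 2 φ W n = W (∇^{III}(φ, n) - φ n)`.
-/

open Filter Topology

section BilinearCalculus

variable {E ι : Type*} [NormedAddCommGroup E] [NormedSpace ℝ E] [Fintype ι] {u : E}

lemma contDiffAt_dotProduct {f g : E → ι → ℝ} {m : WithTop ℕ∞} (hf : ContDiffAt ℝ m f u)
    (hg : ContDiffAt ℝ m g u) : ContDiffAt ℝ m (fun v => f v ⬝ᵥ g v) u :=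
  ContDiffAt.sum fun i _ => (contDiffAt_pi.1 hf i).mul (contDiffAt_pi.1 hg i)

lemma fderiv_dotProduct_apply {f g : E → ι → ℝ} (hf : DifferentiableAt ℝ f u)
    (hg : DifferentiableAt ℝ g u) (e : E) :
    fderiv ℝ (fun v => f v ⬝ᵥ g v) u e = fderiv ℝ f u e ⬝ᵥ g u + f u ⬝ᵥ fderiv ℝ g u e := by
  have h := (dotProductBilin ℝ ℝ (m := ι) (A := ℝ)).toContinuousBilinearMap.fderiv_of_bilinear hf hg
  exact (DFunLike.congr_fun h e).trans (add_comm _ _)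

lemma contDiffAt_cross {f g : E → Fin 3 → ℝ} {m : WithTop ℕ∞} (hf : ContDiffAt ℝ m f u)
    (hg : ContDiffAt ℝ m g u) : ContDiffAt ℝ m (fun v => f v ⨯₃ g v) u :=
  (crossProduct (R := ℝ)).toContinuousBilinearMap.isBoundedBilinearMap.contDiff.contDiffAt.comp u
    (hf.prodMk hg)

lemma fderiv_cross_apply {f g : E → Fin 3 → ℝ} (hf : DifferentiableAt ℝ f u)
    (hg : DifferentiableAt ℝ g u) (e : E) :
    fderiv ℝ (fun v => f v ⨯₃ g v) u e = fderiv ℝ f u e ⨯₃ g u + f u ⨯₃ fderiv ℝ g u e := by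
  have h := (crossProduct (R := ℝ)).toContinuousBilinearMap.fderiv_of_bilinear hf hg
  exact (DFunLike.congr_fun h e).trans (add_comm _ _)

end BilinearCalculus

section MatrixCalculus

variable {E ι : Type*} [NormedAddCommGroup E] [NormedSpace ℝ E] [Fintype ι] [DecidableEq ι]
  {A : E → Matrix ι ι ℝ} {u : E}

lemma differentiableAt_det (hA : ∀ i j, DifferentiableAt ℝ (fun v => A v i j) u) :
    DifferentiableAt ℝ (fun v => (A v).det) u := by
  simp only [Matrix.det_apply]
  fun_prop

lemma differentiableAt_matrix_inv_apply (hA : ∀ i j, DifferentiableAt ℝ (fun v => A v i j) u)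
    (hdet : (A u).det ≠ 0) (i j : ι) : DifferentiableAt ℝ (fun v => (A v)⁻¹ i j) u := by
  have hadj : DifferentiableAt ℝ (fun v => (A v).adjugate i j) u := by
    simp only [Matrix.adjugate_apply]
    refine differentiableAt_det fun k l => ?_
    by_cases hk : k = j
    · simp [hk]
    · simpa [Matrix.updateRow_ne hk] using hA k l
  simp only [Matrix.inv_def, Ring.inverse_eq_inv', Matrix.smul_apply, smul_eq_mul]
  exact ((differentiableAt_det hA).inv hdet).mul hadj

end MatrixCalculus

section AdjugateFinTwo

variable {R M : Type*} [CommRing R] [AddCommGroup M] [Module R M]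

lemma sum_adjugate_zero_smul (A : Matrix (Fin 2) (Fin 2) R) (y : Fin 2 → M) :
    ∑ j, A.adjugate 0 j • y j = A 1 1 • y 0 - A 0 1 • y 1 := by
  simp [Matrix.adjugate_fin_two, sub_eq_add_neg]

lemma sum_adjugate_one_smul (A : Matrix (Fin 2) (Fin 2) R) (y : Fin 2 → M) :
    ∑ j, A.adjugate 1 j • y j = A 0 0 • y 1 - A 1 0 • y 0 := by
  simp [Matrix.adjugate_fin_two, neg_add_eq_sub]

end AdjugateFinTwo

section PartialDerivatives

variable {f g : Param → Vec3} {φ : Param → ℝ} {u : Param}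

lemma contDiffAt_pd {m n : WithTop ℕ∞} (hf : ContDiffAt ℝ n f u) (hmn : m + 1 ≤ n) (i : Fin 2) :
    ContDiffAt ℝ m (pd i f) u :=
  (hf.fderiv_right hmn).clm_apply contDiffAt_const

lemma pd_comm (hf : ContDiffAt ℝ 2 f u) (i j : Fin 2) : pd i (pd j f) u = pd j (pd i f) u := by
  have hdiff : DifferentiableAt ℝ (fderiv ℝ f) u :=
    (hf.fderiv_right (m := 1) (by norm_num)).differentiableAt one_ne_zero
  have pd_pd (i j : Fin 2) :
      pd i (pd j f) u = fderiv ℝ (fderiv ℝ f) u (Pi.single i 1) (Pi.single j 1) := by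
    change fderiv ℝ (fun v => fderiv ℝ f v (Pi.single j 1)) u (Pi.single i 1) = _
    rw [fderiv_clm_apply hdiff (differentiableAt_const _)]
    simp
  rw [pd_pd, pd_pd]
  exact hf.isSymmSndFDerivAt (by simp) _ _

lemma pd_congr (h : f =ᶠ[𝓝 u] g) (i : Fin 2) : pd i f u = pd i g u := by
  rw [pd, pd, h.fderiv_eq]

lemma pd_add (hf : DifferentiableAt ℝ f u) (hg : DifferentiableAt ℝ g u) (i : Fin 2) :
    pd i (fun v => f v + g v) u = pd i f u + pd i g u := by
  simp only [pd, fderiv_fun_add hf hg, _root_.add_apply]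

lemma pd_neg (f : Param → Vec3) (i : Fin 2) (u : Param) :
    pd i (fun v => -f v) u = -pd i f u := by
  simp only [pd, fderiv_fun_neg, _root_.neg_apply]

lemma pd_const_smul (c : ℝ) (f : Param → Vec3) (i : Fin 2) (u : Param) :
    pd i (fun v => c • f v) u = c • pd i f u :=
  congrArg (· (Pi.single i 1)) (congrFun (fderiv_const_smul_field (𝕜 := ℝ) (f := f) c) u)

lemma pd_smul (hφ : DifferentiableAt ℝ φ u) (hf : DifferentiableAt ℝ f u) (i : Fin 2) :
    pd i (fun v => φ v • f v) u = pds i φ u • f u + φ u • pd i f u := by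
  simp only [pd, pds, fderiv_fun_smul hφ hf]
  simp [add_comm]

lemma pd_cross (hf : DifferentiableAt ℝ f u) (hg : DifferentiableAt ℝ g u) (i : Fin 2) :
    pd i (fun v => f v ⨯₃ g v) u = pd i f u ⨯₃ g u + f u ⨯₃ pd i g u :=
  fderiv_cross_apply hf hg _

lemma pd_dotProduct_add_dotProduct_pd_eq_zero {c : ℝ} (hf : DifferentiableAt ℝ f u)
    (hg : DifferentiableAt ℝ g u) (hfg : ∀ᶠ v in 𝓝 u, f v ⬝ᵥ g v = c) (i : Fin 2) :
    pd i f u ⬝ᵥ g u + f u ⬝ᵥ pd i g u = 0 := by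
  have hconst : (fun v => f v ⬝ᵥ g v) =ᶠ[𝓝 u] fun _ => c := hfg
  rw [pd, pd, ← fderiv_dotProduct_apply hf hg, hconst.fderiv_eq, fderiv_fun_const]
  rfl

end PartialDerivatives

lemma eventually_abs_eq_sign_mul {X : Type*} [TopologicalSpace X] {w : X → ℝ} {p : X}
    (hw : ContinuousAt w p) (hp : w p ≠ 0) :
    ∀ᶠ q in 𝓝 p, |w q| = SignType.sign (w p) * w q := by
  have hsign : ∀ᶠ q in 𝓝 p, SignType.sign (w p) = SignType.sign (w q) :=
    ((continuousAt_sign_of_ne_zero hp).comp hw).eventually (mem_nhds_discrete.2 rfl)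
  filter_upwards [hsign] with q hq
  rw [hq, sign_mul_self]

section BeltramiOperators

variable {a : Param → Matrix (Fin 2) (Fin 2) ℝ} {W : Param → ℝ} {f : Param → Vec3} {u : Param}

/- Replacing `√|det a|` by a smooth signed root `W` of `det a` costs nothing: the sign is locally
constant, so it comes out of the derivative and cancels against the prefactor. -/
lemma beltrami2_eq_of_det_eq_sq (ha : ∀ i j, DifferentiableAt ℝ (fun v => a v i j) u)
    (hW : DifferentiableAt ℝ W u) (hWu : W u ≠ 0) (hdet : ∀ᶠ v in 𝓝 u, (a v).det = W v ^ 2)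
    (hf : ∀ j, DifferentiableAt ℝ (pd j f) u) :
    beltrami2 a f u =
      -((W u)⁻¹ • ∑ i, pd i (fun v => ∑ j, (W v * (a v)⁻¹ i j) • pd j f v) u) := by
  set σ : ℝ := (SignType.sign (W u) : ℝ)
  have hsqrt : ∀ᶠ v in 𝓝 u, √|(a v).det| = σ * W v := by
    filter_upwards [hdet, eventually_abs_eq_sign_mul hW.continuousAt hWu] with v hv habs
    rw [hv, abs_sq, Real.sqrt_sq_eq_abs, habs]
  have hterm (i j : Fin 2) : DifferentiableAt ℝ (fun v => (W v * (a v)⁻¹ i j) • pd j f v) u := by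
    have hdetu : (a u).det ≠ 0 := hdet.self_of_nhds ▸ pow_ne_zero 2 hWu
    exact (hW.mul (differentiableAt_matrix_inv_apply ha hdetu i j)).smul (hf j)
  have hpd (i j : Fin 2) : pd i (fun v => (√|(a v).det| * (a v)⁻¹ i j) • pd j f v) u =
      σ • pd i (fun v => (W v * (a v)⁻¹ i j) • pd j f v) u := by
    rw [← pd_const_smul]
    refine pd_congr (hsqrt.mono fun v hv => ?_) i
    simp only [hv, smul_smul, mul_assoc]
  have hσ : (σ * W u)⁻¹ * σ = (W u)⁻¹ := by
    have hσ0 : σ ≠ 0 := left_ne_zero_of_mul (sign_mul_self (W u) ▸ abs_ne_zero.2 hWu)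
    field_simp
  simp only [beltrami2, hpd, hsqrt.self_of_nhds, Fin.sum_univ_two, pd_add (hterm _ 0) (hterm _ 1),
    ← smul_add, smul_smul, hσ]

end BeltramiOperators

section CrossProductAlgebra

variable {R : Type*} [CommRing R]

lemma cross_eq_smul_of_dot_eq_zero {a b n : Fin 3 → R} (hn : n ⬝ᵥ n = 1) (ha : a ⬝ᵥ n = 0)
    (hb : b ⬝ᵥ n = 0) : a ⨯₃ b = (a ⨯₃ b ⬝ᵥ n) • n := by
  have hperp : a ⨯₃ b ⨯₃ n = 0 := by simp [cross_cross_eq_smul_sub_smul, ha, hb]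
  have h := cross_cross_eq_smul_sub_smul' n (a ⨯₃ b) n
  rw [hperp, map_zero, hn, one_smul, eq_comm, sub_eq_zero] at h
  exact h

/- For the self-adjoint map `A` of the tangent plane with `A a = p`, `A b = q`, and the rotation `J`
by a right angle, the next two lemmas are the identity `A J + J A = (tr A) J`. -/
lemma smul_sub_smul_eq_neg_cross_fst {p q a b : Fin 3 → R} (h : p ⬝ᵥ b = q ⬝ᵥ a) :
    (b ⬝ᵥ b) • p - (a ⬝ᵥ b) • q = -(q ⨯₃ (a ⨯₃ b) + b ⨯₃ (q ⨯₃ a + b ⨯₃ p)) := by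
  simp only [map_add, cross_cross_eq_smul_sub_smul', dotProduct_comm b p, dotProduct_comm b a,
    dotProduct_comm a q, h]
  module

lemma smul_sub_smul_eq_neg_cross_snd {p q a b : Fin 3 → R} (h : p ⬝ᵥ b = q ⬝ᵥ a) :
    (a ⬝ᵥ a) • q - (b ⬝ᵥ a) • p = -(a ⨯₃ b ⨯₃ p + (q ⨯₃ a + b ⨯₃ p) ⨯₃ a) := by
  simp only [map_add, LinearMap.add_apply, cross_cross_eq_smul_sub_smul, dotProduct_comm b p,
    dotProduct_comm a p, h]
  module

end CrossProductAlgebra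

lemma dotProduct_self_pos {ι : Type*} [Fintype ι] {w : ι → ℝ} (hw : w ≠ 0) : 0 < w ⬝ᵥ w := by
  simpa using dotProduct_star_self_pos_iff.2 hw

section GaussMap

variable {x : Param → Vec3} {u : Param}

-- `dot3 a b` unfolds to Mathlib's `a ⬝ᵥ b`, so lemmas on the latter apply by definition.
lemma norm3_pos {w : Vec3} (hw : w ≠ 0) : 0 < norm3 w :=
  Real.sqrt_pos.2 (dotProduct_self_pos hw)

lemma norm3_mul_self (w : Vec3) : norm3 w * norm3 w = w ⬝ᵥ w :=
  Real.mul_self_sqrt (Finset.sum_nonneg fun k _ => mul_self_nonneg (w k))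

lemma norm3_smul_gaussMap (himm : LinearIndependent ℝ ![pd 0 x u, pd 1 x u]) :
    norm3 (pd 0 x u ⨯₃ pd 1 x u) • gaussMap x u = pd 0 x u ⨯₃ pd 1 x u :=
  smul_inv_smul₀ (norm3_pos (crossProduct_ne_zero_iff_linearIndependent.2 himm)).ne' _

lemma gaussMap_dot_self (himm : LinearIndependent ℝ ![pd 0 x u, pd 1 x u]) :
    gaussMap x u ⬝ᵥ gaussMap x u = 1 := by
  have hpos := norm3_pos (crossProduct_ne_zero_iff_linearIndependent.2 himm)
  rw [gaussMap, smul_dotProduct, dotProduct_smul, ← norm3_mul_self, smul_eq_mul, smul_eq_mul]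
  field_simp

lemma pd_dot_gaussMap (x : Param → Vec3) (u : Param) (i : Fin 2) :
    pd i x u ⬝ᵥ gaussMap x u = 0 := by
  fin_cases i <;> simp [gaussMap]

lemma contDiffAt_gaussMap {m n : WithTop ℕ∞} (hx : ContDiffAt ℝ n x u) (hmn : m + 1 ≤ n)
    (himm : LinearIndependent ℝ ![pd 0 x u, pd 1 x u]) : ContDiffAt ℝ m (gaussMap x) u := by
  have hcross := contDiffAt_cross (contDiffAt_pd hx hmn 0) (contDiffAt_pd hx hmn 1)
  have hne := crossProduct_ne_zero_iff_linearIndependent.2 himm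
  have hnorm : ContDiffAt ℝ m (fun v => norm3 (pd 0 x v ⨯₃ pd 1 x v)) u :=
    (contDiffAt_dotProduct hcross hcross).sqrt (dotProduct_self_pos hne).ne'
  exact (hnorm.inv (norm3_pos hne).ne').smul hcross

lemma eventually_linearIndependent_pd (hx : ContDiffAt ℝ 1 x u)
    (himm : LinearIndependent ℝ ![pd 0 x u, pd 1 x u]) :
    ∀ᶠ v in 𝓝 u, LinearIndependent ℝ ![pd 0 x v, pd 1 x v] := by
  have hpd (i : Fin 2) : ContinuousAt (pd i x) u :=
    (contDiffAt_pd (m := 0) hx (by norm_num) i).continuousAt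
  have hframe : ContinuousAt (fun v => ![pd 0 x v, pd 1 x v]) u :=
    continuousAt_pi.2 fun i => by fin_cases i <;> exact hpd _
  exact hframe.eventually himm.eventually

lemma differentiableAt_gaussMap (hx : ContDiffAt ℝ 2 x u)
    (himm : LinearIndependent ℝ ![pd 0 x u, pd 1 x u]) : DifferentiableAt ℝ (gaussMap x) u :=
  (contDiffAt_gaussMap (m := 1) hx (by norm_num) himm).differentiableAt one_ne_zero

lemma pd_gaussMap_dot_gaussMap (hx : ContDiffAt ℝ 2 x u)
    (himm : LinearIndependent ℝ ![pd 0 x u, pd 1 x u]) (i : Fin 2) :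
    pd i (gaussMap x) u ⬝ᵥ gaussMap x u = 0 := by
  have hn := differentiableAt_gaussMap hx himm
  have hunit : ∀ᶠ v in 𝓝 u, gaussMap x v ⬝ᵥ gaussMap x v = 1 :=
    (eventually_linearIndependent_pd (hx.of_le one_le_two) himm).mono fun _ => gaussMap_dot_self
  have h := pd_dotProduct_add_dotProduct_pd_eq_zero hn hn hunit i
  rw [dotProduct_comm (gaussMap x u)] at h
  linarith

lemma fformII_apply_eq_neg_dot (hx : ContDiffAt ℝ 2 x u)
    (himm : LinearIndependent ℝ ![pd 0 x u, pd 1 x u]) (i j : Fin 2) :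
    fformII x u i j = -(pd j x u ⬝ᵥ pd i (gaussMap x) u) := by
  have hpd : DifferentiableAt ℝ (pd j x) u :=
    (contDiffAt_pd (m := 1) hx (by norm_num) j).differentiableAt one_ne_zero
  exact eq_neg_of_add_eq_zero_left <| pd_dotProduct_add_dotProduct_pd_eq_zero hpd
    (differentiableAt_gaussMap hx himm) (.of_forall fun v => pd_dot_gaussMap x v j) i

lemma fformII_symm (hx : ContDiffAt ℝ 2 x u) (i j : Fin 2) : fformII x u i j = fformII x u j i :=
  congrArg (dot3 · (gaussMap x u)) (pd_comm hx i j)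

end GaussMap

/-- The Jacobian `W` of the Gauss map, i.e. `n_{/1} × n_{/2} = W n`: a square root of
`det (e_{ij})` which, unlike `√(det (e_{ij}))`, carries a sign. -/
def gaussJacobian (x : Param → Vec3) (u : Param) : ℝ :=
  pd 0 (gaussMap x) u ⨯₃ pd 1 (gaussMap x) u ⬝ᵥ gaussMap x u

/-- The function `2H/K`, i.e. the sum of the principal radii of curvature. -/
def radiiSum (x : Param → Vec3) (u : Param) : ℝ := 2 * meanCurv x u / gaussCurv x u

/-- The pair `(f_{/2} × n, n × f_{/1})`: the differential of `f` turned by a right angle, both in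
the parameter plane and in the tangent plane. For `f = n` it equals `W e^{ij} n_{/j}`. -/
def conormal (n f : Param → Vec3) (i : Fin 2) (u : Param) : Vec3 :=
  ![pd 1 f u ⨯₃ n u, n u ⨯₃ pd 0 f u] i

section Conormal

variable {n f : Param → Vec3} {u : Param}

lemma conormal_zero (n f : Param → Vec3) (u : Param) : conormal n f 0 u = pd 1 f u ⨯₃ n u := rfl

lemma conormal_one (n f : Param → Vec3) (u : Param) : conormal n f 1 u = n u ⨯₃ pd 0 f u := rfl

lemma differentiableAt_conormal (hn : ContDiffAt ℝ 1 n u) (hf : ContDiffAt ℝ 2 f u) (i : Fin 2) :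
    DifferentiableAt ℝ (conormal n f i) u := by
  have hpd (j : Fin 2) : ContDiffAt ℝ 1 (pd j f) u := contDiffAt_pd hf (by norm_num) j
  fin_cases i
  · exact (contDiffAt_cross (hpd 1) hn).differentiableAt one_ne_zero
  · exact (contDiffAt_cross hn (hpd 0)).differentiableAt one_ne_zero

/- The second derivatives of `f` cancel. -/
lemma sum_pd_conormal (hn : ContDiffAt ℝ 1 n u) (hf : ContDiffAt ℝ 2 f u) :
    ∑ i, pd i (conormal n f i) u = pd 1 f u ⨯₃ pd 0 n u + pd 1 n u ⨯₃ pd 0 f u := by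
  have hn' := hn.differentiableAt one_ne_zero
  have hpd (j : Fin 2) : DifferentiableAt ℝ (pd j f) u :=
    (contDiffAt_pd (m := 1) hf (by norm_num) j).differentiableAt one_ne_zero
  have hfst : pd 0 (conormal n f 0) u = pd 0 (pd 1 f) u ⨯₃ n u + pd 1 f u ⨯₃ pd 0 n u :=
    pd_cross (hpd 1) hn' 0
  have hsnd : pd 1 (conormal n f 1) u = pd 1 n u ⨯₃ pd 0 f u + n u ⨯₃ pd 1 (pd 0 f) u :=
    pd_cross hn' (hpd 0) 1
  rw [Fin.sum_univ_two, hfst, hsnd, pd_comm hf 1 0, ← cross_anticomm (pd 0 (pd 1 f) u) (n u)]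
  abel

end Conormal

section ThirdFundamentalForm

variable {x : Param → Vec3} {u : Param}

lemma cross_pd_gaussMap (hx : ContDiffAt ℝ 2 x u)
    (himm : LinearIndependent ℝ ![pd 0 x u, pd 1 x u]) :
    pd 0 (gaussMap x) u ⨯₃ pd 1 (gaussMap x) u = gaussJacobian x u • gaussMap x u :=
  cross_eq_smul_of_dot_eq_zero (gaussMap_dot_self himm) (pd_gaussMap_dot_gaussMap hx himm 0)
    (pd_gaussMap_dot_gaussMap hx himm 1)

lemma det_fformIII (hx : ContDiffAt ℝ 2 x u)
    (himm : LinearIndependent ℝ ![pd 0 x u, pd 1 x u]) :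
    (fformIII x u).det = gaussJacobian x u ^ 2 := by
  rw [Matrix.det_fin_two]
  refine (cross_dot_cross _ _ _ _).symm.trans ?_
  rw [cross_pd_gaussMap hx himm, smul_dotProduct, dotProduct_smul, gaussMap_dot_self himm,
    smul_eq_mul, smul_eq_mul]
  ring

lemma det_fformII (hx : ContDiffAt ℝ 2 x u)
    (himm : LinearIndependent ℝ ![pd 0 x u, pd 1 x u]) :
    (fformII x u).det = norm3 (pd 0 x u ⨯₃ pd 1 x u) * gaussJacobian x u := by
  have hlagrange :=
    cross_dot_cross (pd 0 x u) (pd 1 x u) (pd 0 (gaussMap x) u) (pd 1 (gaussMap x) u)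
  rw [cross_pd_gaussMap hx himm, ← norm3_smul_gaussMap himm, smul_dotProduct, dotProduct_smul,
    gaussMap_dot_self himm, smul_eq_mul, smul_eq_mul, mul_one] at hlagrange
  simp only [Matrix.det_fin_two, fformII_apply_eq_neg_dot hx himm, hlagrange]
  ring

lemma gaussJacobian_ne_zero (hx : ContDiffAt ℝ 2 x u)
    (himm : LinearIndependent ℝ ![pd 0 x u, pd 1 x u]) (hpar : (fformII x u).det ≠ 0) :
    gaussJacobian x u ≠ 0 :=
  right_ne_zero_of_mul (det_fformII hx himm ▸ hpar)

lemma contDiffAt_gaussJacobian (hx : ContDiffAt ℝ 3 x u)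
    (himm : LinearIndependent ℝ ![pd 0 x u, pd 1 x u]) :
    ContDiffAt ℝ 1 (gaussJacobian x) u := by
  have hn : ContDiffAt ℝ 2 (gaussMap x) u := contDiffAt_gaussMap hx (by norm_num) himm
  have hpd (i : Fin 2) : ContDiffAt ℝ 1 (pd i (gaussMap x)) u := contDiffAt_pd hn (by norm_num) i
  exact contDiffAt_dotProduct (contDiffAt_cross (hpd 0) (hpd 1)) (hn.of_le one_le_two)

lemma det_fformI_ne_zero (himm : LinearIndependent ℝ ![pd 0 x u, pd 1 x u]) :
    (fformI x u).det ≠ 0 := by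
  have h := dotProduct_self_pos (crossProduct_ne_zero_iff_linearIndependent.2 himm)
  rw [cross_dot_cross] at h
  rw [Matrix.det_fin_two]
  exact h.ne'

lemma radiiSum_mul_det_fformII (hI : (fformI x u).det ≠ 0) (hII : (fformII x u).det ≠ 0) :
    radiiSum x u * (fformII x u).det = ∑ i, ∑ j, (fformI x u).adjugate i j * fformII x u i j := by
  have hinv : ∑ i, ∑ j, (fformI x u)⁻¹ i j * fformII x u i j =
      (fformI x u).det⁻¹ * ∑ i, ∑ j, (fformI x u).adjugate i j * fformII x u i j := by
    simp only [Matrix.inv_def, Ring.inverse_eq_inv', Matrix.smul_apply, smul_eq_mul, mul_assoc,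
      Finset.mul_sum]
  rw [radiiSum, meanCurv, gaussCurv, hinv]
  field_simp

lemma sum_adjugate_fformI_mul_fformII (hx : ContDiffAt ℝ 2 x u)
    (himm : LinearIndependent ℝ ![pd 0 x u, pd 1 x u]) :
    ∑ i, ∑ j, (fformI x u).adjugate i j * fformII x u i j =
      pd 0 x u ⨯₃ pd 1 x u ⬝ᵥ
        (pd 1 x u ⨯₃ pd 0 (gaussMap x) u + pd 1 (gaussMap x) u ⨯₃ pd 0 x u) := by
  have hI (i j : Fin 2) : fformI x u i j = pd i x u ⬝ᵥ pd j x u := rfl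
  simp only [Fin.sum_univ_two, Matrix.adjugate_fin_two, Matrix.of_apply, Matrix.cons_val',
    Matrix.cons_val, fformII_apply_eq_neg_dot hx himm, hI, dotProduct_add, cross_dot_cross,
    dotProduct_comm (pd 1 x u) (pd 0 x u)]
  ring

lemma cross_add_cross_eq_radiiSum_smul (hx : ContDiffAt ℝ 2 x u)
    (himm : LinearIndependent ℝ ![pd 0 x u, pd 1 x u]) (hpar : (fformII x u).det ≠ 0) :
    pd 1 x u ⨯₃ pd 0 (gaussMap x) u + pd 1 (gaussMap x) u ⨯₃ pd 0 x u =
      (radiiSum x u * gaussJacobian x u) • gaussMap x u := by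
  set w := pd 1 x u ⨯₃ pd 0 (gaussMap x) u + pd 1 (gaussMap x) u ⨯₃ pd 0 x u with hw
  have hnormal : w = (w ⬝ᵥ gaussMap x u) • gaussMap x u := by
    have hn := gaussMap_dot_self himm
    have hdn := pd_gaussMap_dot_gaussMap hx himm
    rw [hw, add_dotProduct, add_smul,
      ← cross_eq_smul_of_dot_eq_zero hn (pd_dot_gaussMap x u 1) (hdn 0),
      ← cross_eq_smul_of_dot_eq_zero hn (hdn 1) (pd_dot_gaussMap x u 0)]
  have hnorm := norm3_pos (crossProduct_ne_zero_iff_linearIndependent.2 himm)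
  have hcoeff : w ⬝ᵥ gaussMap x u = radiiSum x u * gaussJacobian x u := by
    refine mul_left_cancel₀ hnorm.ne' ?_
    calc norm3 (pd 0 x u ⨯₃ pd 1 x u) * (w ⬝ᵥ gaussMap x u)
        = pd 0 x u ⨯₃ pd 1 x u ⬝ᵥ w := by
          rw [dotProduct_comm w, ← smul_eq_mul, ← smul_dotProduct, norm3_smul_gaussMap himm]
      _ = radiiSum x u * (fformII x u).det := by
          rw [radiiSum_mul_det_fformII (det_fformI_ne_zero himm) hpar,
            sum_adjugate_fformI_mul_fformII hx himm]
      _ = _ := by rw [det_fformII hx himm]; ring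
  rw [hnormal, hcoeff]

lemma eventually_det_fformII_ne_zero (hx : ContDiffAt ℝ 3 x u)
    (himm : LinearIndependent ℝ ![pd 0 x u, pd 1 x u]) (hpar : (fformII x u).det ≠ 0) :
    ∀ᶠ v in 𝓝 u, (fformII x v).det ≠ 0 := by
  have hn : ContDiffAt ℝ 1 (gaussMap x) u := contDiffAt_gaussMap hx (by norm_num) himm
  have hpd (j : Fin 2) : ContDiffAt ℝ 2 (pd j x) u := contDiffAt_pd hx (by norm_num) j
  have hII (i j : Fin 2) : DifferentiableAt ℝ (fun v => fformII x v i j) u :=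
    (contDiffAt_dotProduct (contDiffAt_pd (m := 1) (hpd j) (by norm_num) i) hn).differentiableAt
      one_ne_zero
  exact (differentiableAt_det hII).continuousAt.eventually_ne hpar

lemma radiiSum_eq_div (hx : ContDiffAt ℝ 2 x u)
    (himm : LinearIndependent ℝ ![pd 0 x u, pd 1 x u]) (hpar : (fformII x u).det ≠ 0) :
    radiiSum x u = (pd 1 x u ⨯₃ pd 0 (gaussMap x) u + pd 1 (gaussMap x) u ⨯₃ pd 0 x u) ⬝ᵥ
      gaussMap x u / gaussJacobian x u := by
  rw [cross_add_cross_eq_radiiSum_smul hx himm hpar, smul_dotProduct, gaussMap_dot_self himm,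
    smul_eq_mul, mul_one, mul_div_cancel_right₀ _ (gaussJacobian_ne_zero hx himm hpar)]

lemma differentiableAt_radiiSum (hx : ContDiffAt ℝ 3 x u)
    (himm : LinearIndependent ℝ ![pd 0 x u, pd 1 x u]) (hpar : (fformII x u).det ≠ 0) :
    DifferentiableAt ℝ (radiiSum x) u := by
  have hx2 : ContDiffAt ℝ 2 x u := hx.of_le (by norm_num)
  have hn : ContDiffAt ℝ 2 (gaussMap x) u := contDiffAt_gaussMap hx (by norm_num) himm
  have hpdx (i : Fin 2) : ContDiffAt ℝ 1 (pd i x) u := contDiffAt_pd hx2 (by norm_num) i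
  have hpdn (i : Fin 2) : ContDiffAt ℝ 1 (pd i (gaussMap x)) u := contDiffAt_pd hn (by norm_num) i
  have hnum := contDiffAt_dotProduct ((contDiffAt_cross (hpdx 1) (hpdn 0)).add
    (contDiffAt_cross (hpdn 1) (hpdx 0))) (hn.of_le one_le_two)
  refine ((hnum.div (contDiffAt_gaussJacobian hx himm)
    (gaussJacobian_ne_zero hx2 himm hpar)).differentiableAt one_ne_zero).congr_of_eventuallyEq ?_
  filter_upwards [hx2.eventually (by simp), eventually_linearIndependent_pd
    (hx.of_le (by norm_num)) himm, eventually_det_fformII_ne_zero hx himm hpar] with v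
  exact radiiSum_eq_div

lemma differentiableAt_fformIII_apply (hx : ContDiffAt ℝ 3 x u)
    (himm : LinearIndependent ℝ ![pd 0 x u, pd 1 x u]) (i j : Fin 2) :
    DifferentiableAt ℝ (fun v => fformIII x v i j) u := by
  have hn : ContDiffAt ℝ 2 (gaussMap x) u := contDiffAt_gaussMap hx (by norm_num) himm
  exact (contDiffAt_dotProduct (contDiffAt_pd (m := 1) hn (by norm_num) i)
    (contDiffAt_pd hn (by norm_num) j)).differentiableAt one_ne_zero

lemma sum_gaussJacobian_mul_inv_smul (hx : ContDiffAt ℝ 2 x u)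
    (himm : LinearIndependent ℝ ![pd 0 x u, pd 1 x u]) (hpar : (fformII x u).det ≠ 0)
    (i : Fin 2) (y : Fin 2 → Vec3) :
    ∑ j, (gaussJacobian x u * (fformIII x u)⁻¹ i j) • y j =
      (gaussJacobian x u)⁻¹ • ∑ j, (fformIII x u).adjugate i j • y j := by
  have hW := gaussJacobian_ne_zero hx himm hpar
  simp only [Matrix.inv_def, Ring.inverse_eq_inv', det_fformIII hx himm, Matrix.smul_apply,
    smul_eq_mul, Finset.smul_sum, smul_smul]
  refine Finset.sum_congr rfl fun j _ => ?_
  congr 1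
  field_simp

lemma sum_gaussJacobian_mul_inv_smul_pd_gaussMap (hx : ContDiffAt ℝ 2 x u)
    (himm : LinearIndependent ℝ ![pd 0 x u, pd 1 x u]) (hpar : (fformII x u).det ≠ 0) (i : Fin 2) :
    ∑ j, (gaussJacobian x u * (fformIII x u)⁻¹ i j) • pd j (gaussMap x) u =
      conormal (gaussMap x) (gaussMap x) i u := by
  have hcross := cross_pd_gaussMap hx himm
  rw [sum_gaussJacobian_mul_inv_smul hx himm hpar,
    inv_smul_eq_iff₀ (gaussJacobian_ne_zero hx himm hpar)]
  match i with
  | 0 =>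
    rw [sum_adjugate_zero_smul, conormal_zero, ← map_smul, ← hcross]
    exact (cross_cross_eq_smul_sub_smul' _ _ _).symm
  | 1 =>
    rw [sum_adjugate_one_smul, conormal_one, ← LinearMap.smul_apply, ← map_smul, ← hcross]
    exact (cross_cross_eq_smul_sub_smul _ _ _).symm

lemma sum_gaussJacobian_mul_inv_smul_pd (hx : ContDiffAt ℝ 2 x u)
    (himm : LinearIndependent ℝ ![pd 0 x u, pd 1 x u]) (hpar : (fformII x u).det ≠ 0) (i : Fin 2) :
    ∑ j, (gaussJacobian x u * (fformIII x u)⁻¹ i j) • pd j x u =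
      -(conormal (gaussMap x) x i u + radiiSum x u • conormal (gaussMap x) (gaussMap x) i u) := by
  have hsymm : pd 0 x u ⬝ᵥ pd 1 (gaussMap x) u = pd 1 x u ⬝ᵥ pd 0 (gaussMap x) u := by
    have h := fformII_symm hx 1 0
    rwa [fformII_apply_eq_neg_dot hx himm, fformII_apply_eq_neg_dot hx himm, neg_inj] at h
  rw [sum_gaussJacobian_mul_inv_smul hx himm hpar,
    inv_smul_eq_iff₀ (gaussJacobian_ne_zero hx himm hpar)]
  match i with
  | 0 =>
    rw [sum_adjugate_zero_smul]
    refine (smul_sub_smul_eq_neg_cross_fst hsymm).trans ?_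
    rw [cross_pd_gaussMap hx himm, cross_add_cross_eq_radiiSum_smul hx himm hpar, map_smul,
      map_smul, conormal_zero, conormal_zero]
    module
  | 1 =>
    rw [sum_adjugate_one_smul]
    refine (smul_sub_smul_eq_neg_cross_snd hsymm).trans ?_
    rw [cross_pd_gaussMap hx himm, cross_add_cross_eq_radiiSum_smul hx himm hpar, map_smul,
      map_smul, LinearMap.smul_apply, LinearMap.smul_apply, conormal_one, conormal_one]
    module

lemma beltrami1_fformIII_gaussMap (hx : ContDiffAt ℝ 2 x u)
    (himm : LinearIndependent ℝ ![pd 0 x u, pd 1 x u]) (hpar : (fformII x u).det ≠ 0)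
    (φ : Param → ℝ) :
    beltrami1 (fformIII x) φ (gaussMap x) u =
      (gaussJacobian x u)⁻¹ • ∑ i, pds i φ u • conormal (gaussMap x) (gaussMap x) i u := by
  have hW := gaussJacobian_ne_zero hx himm hpar
  simp only [beltrami1, ← sum_gaussJacobian_mul_inv_smul_pd_gaussMap hx himm hpar, Finset.smul_sum,
    smul_smul]
  refine Finset.sum_congr rfl fun i _ => Finset.sum_congr rfl fun j _ => ?_
  congr 1
  field_simp

lemma sum_pd_conormal_add_radiiSum_smul_conormal (hx : ContDiffAt ℝ 3 x u)
    (himm : LinearIndependent ℝ ![pd 0 x u, pd 1 x u]) (hpar : (fformII x u).det ≠ 0) :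
    ∑ i, pd i (fun v => conormal (gaussMap x) x i v +
        radiiSum x v • conormal (gaussMap x) (gaussMap x) i v) u =
      ∑ i, pds i (radiiSum x) u • conormal (gaussMap x) (gaussMap x) i u -
        (radiiSum x u * gaussJacobian x u) • gaussMap x u := by
  have hx2 : ContDiffAt ℝ 2 x u := hx.of_le (by norm_num)
  have hn2 : ContDiffAt ℝ 2 (gaussMap x) u := contDiffAt_gaussMap hx (by norm_num) himm
  have hn1 : ContDiffAt ℝ 1 (gaussMap x) u := hn2.of_le one_le_two
  have hφ := differentiableAt_radiiSum hx himm hpar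
  have hdivx : ∑ i, pd i (conormal (gaussMap x) x i) u =
      (radiiSum x u * gaussJacobian x u) • gaussMap x u := by
    rw [sum_pd_conormal hn1 hx2, cross_add_cross_eq_radiiSum_smul hx2 himm hpar]
  have hdivn : ∑ i, pd i (conormal (gaussMap x) (gaussMap x) i) u =
      (-2 * gaussJacobian x u) • gaussMap x u := by
    rw [sum_pd_conormal hn1 hn2, ← cross_anticomm, cross_pd_gaussMap hx2 himm]
    module
  have hterm (i : Fin 2) : pd i (fun v => conormal (gaussMap x) x i v +
        radiiSum x v • conormal (gaussMap x) (gaussMap x) i v) u =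
      pd i (conormal (gaussMap x) x i) u +
        (pds i (radiiSum x) u • conormal (gaussMap x) (gaussMap x) i u +
          radiiSum x u • pd i (conormal (gaussMap x) (gaussMap x) i) u) := by
    have hcn := differentiableAt_conormal hn1 hn2 i
    rw [pd_add (differentiableAt_conormal hn1 hx2 i) (hφ.fun_smul hcn), pd_smul hφ hcn]
  calc _ = ∑ i, pd i (conormal (gaussMap x) x i) u +
        (∑ i, pds i (radiiSum x) u • conormal (gaussMap x) (gaussMap x) i u +
          radiiSum x u • ∑ i, pd i (conormal (gaussMap x) (gaussMap x) i) u) := by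
        simp only [hterm, Finset.smul_sum, Finset.sum_add_distrib]
    _ = _ := by rw [hdivx, hdivn]; module

end ThirdFundamentalForm

theorem stmt4_general {x : Param → Vec3} {u : Param} (hx : ContDiffAt ℝ 3 x u)
    (himm : LinearIndependent ℝ ![pd 0 x u, pd 1 x u]) (hpar : (fformII x u).det ≠ 0) :
    beltrami2 (fformIII x) x u =
      beltrami1 (fformIII x) (fun v => 2 * meanCurv x v / gaussCurv x v) (gaussMap x) u
        - (2 * meanCurv x u / gaussCurv x u) • gaussMap x u := by
  change _ = beltrami1 (fformIII x) (radiiSum x) (gaussMap x) u - radiiSum x u • gaussMap x u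
  have hx2 : ContDiffAt ℝ 2 x u := hx.of_le (by norm_num)
  have hW := gaussJacobian_ne_zero hx2 himm hpar
  have hregular : ∀ᶠ v in 𝓝 u, ContDiffAt ℝ 2 x v ∧ LinearIndependent ℝ ![pd 0 x v, pd 1 x v] ∧
      (fformII x v).det ≠ 0 :=
    (hx2.eventually (by simp)).and <| (eventually_linearIndependent_pd (hx.of_le (by norm_num))
      himm).and <| eventually_det_fformII_ne_zero hx himm hpar
  have hdet : ∀ᶠ v in 𝓝 u, (fformIII x v).det = gaussJacobian x v ^ 2 :=
    hregular.mono fun v hv => det_fformIII hv.1 hv.2.1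
  have hpd (j : Fin 2) : DifferentiableAt ℝ (pd j x) u :=
    (contDiffAt_pd (m := 1) hx2 (by norm_num) j).differentiableAt one_ne_zero
  have hflux (i : Fin 2) :
      pd i (fun v => ∑ j, (gaussJacobian x v * (fformIII x v)⁻¹ i j) • pd j x v) u =
        -pd i (fun v => conormal (gaussMap x) x i v +
          radiiSum x v • conormal (gaussMap x) (gaussMap x) i v) u := by
    rw [← pd_neg]
    exact pd_congr (hregular.mono fun v hv =>
      sum_gaussJacobian_mul_inv_smul_pd hv.1 hv.2.1 hv.2.2 i) i
  rw [beltrami2_eq_of_det_eq_sq (differentiableAt_fformIII_apply hx himm)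
    ((contDiffAt_gaussJacobian hx himm).differentiableAt one_ne_zero) hW hdet hpd]
  simp only [hflux, Finset.sum_neg_distrib, smul_neg, neg_neg]
  rw [sum_pd_conormal_add_radiiSum_smul_conormal hx himm hpar,
    beltrami1_fformIII_gaussMap hx2 himm hpar, smul_sub, smul_smul]
  congr 2
  field_simp

/-- `Δ^{III} x = ∇^{III}(2H/K, n) − (2H/K) n` on `U`. -/
theorem stmt4 (U : Set Param) (x : Param → Vec3)
    (hU : IsOpen U) (hUconn : IsConnected U)
    (hx : ContDiffOn ℝ (⊤ : ℕ∞) x U) (himm : Immersed x U)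
    (hpar : ∀ u ∈ U, (fformII x u).det ≠ 0) :
    ∀ u ∈ U,
      beltrami2 (fformIII x) x u =
        beltrami1 (fformIII x) (fun v => 2 * meanCurv x v / gaussCurv x v) (gaussMap x) u
          - (2 * meanCurv x u / gaussCurv x u) • gaussMap x u := by
  intro u hu
  have three_le_top : (3 : WithTop ℕ∞) ≤ (⊤ : ℕ∞) := WithTop.coe_le_coe.2 le_top
  exact stmt4_general ((hx.contDiffAt (hU.mem_nhds hu)).of_le three_le_top) (himm u hu) (hpar u hu)
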